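/- Let 0 < α < 1, t > 0 and x > 0. Then for every integer k ≥ 1 one has a_{k+1}(x,t) < a_k(x,t). -/

import Mathlib

open Real MeasureTheory

/-- The Mittag-Leffler function `E_α(r) = ∑ r^k / Γ(1+kα)`. -/
noncomputable def mittagLeffler (α r : ℝ) : ℝ :=
  ∑' k : ℕ, r ^ k / Real.Gamma (1 + k * α)

/-- The coefficients `a_k(x,t)` obtained by splitting the Fourier integral of the
fundamental solution over the intervals where `cos (xξ)` has a fixed sign. -/
noncomputable def aCoeff (α t x : ℝ) (k : ℕ) : ℝ :=
  if k = 0 then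
    ∫ ξ in (0 : ℝ)..(π / (2 * x)),
      mittagLeffler α ((1 - ξ ^ 2) * t ^ α) * Real.cos (x * ξ)
  else
    (-1 : ℝ) ^ k *
      ∫ ξ in (π * (2 * (k : ℝ) - 1) / (2 * x))..(π * (2 * (k : ℝ) + 1) / (2 * x)),
        mittagLeffler α ((1 - ξ ^ 2) * t ^ α) * Real.cos (x * ξ)

/-! Translating each lobe of the cosine to `[-π/(2x), π/(2x)]` turns `a_k` into the integral of
`E_α((1 - (η + kπ/x)²) t^α)` against the fixed weight `cos (xη) ≥ 0`, so it is enough that `E_α` is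
strictly increasing on the whole line. As `E_α' = E_{α,α} / α`, this means `E_{α,α} > 0`, which is
clear on `[0, ∞)`. Suppose that `r < 0` is the largest zero of `E_{α,α}`. Then the function
`g(x) = E_{α,0}(r x^α) = r x^α E_{α,α}(r x^α)` vanishes at `0` and `1` and is negative in between,
so the extremum principle for fractional derivatives makes `∫₀¹ (1 - x)^(α-1) g'(x) dx` positive.
By the Beta integral this quantity is `α r Γ(α) E_{α,α}'(r)`. Hence `E_{α,α}'(r) < 0`, although
`E_{α,α}` is positive to the right of `r`. -/

open Set Filter
open scoped Topology NNReal ENNReal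

section PowerSeries

variable {𝕜 : Type*} [NontriviallyNormedField 𝕜] [CompleteSpace 𝕜] {c : ℕ → 𝕜}

lemma hasFPowerSeriesOnBall_tsum_mul_pow (hc : ∀ z : 𝕜, Summable fun k => c k * z ^ k) :
    HasFPowerSeriesOnBall (fun z => ∑' k, c k * z ^ k)
      (FormalMultilinearSeries.ofScalars 𝕜 c) 0 ∞ := by
  set p := FormalMultilinearSeries.ofScalars 𝕜 c
  have hle_radius (z : 𝕜) : (‖z‖₊ : ℝ≥0∞) ≤ p.radius :=
    p.le_radius_of_tendsto (l := 0) <| by simpa [p] using (hc z).tendsto_atTop_zero.norm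
  have hradius : p.radius = ∞ := ENNReal.eq_top_of_forall_nnreal_le fun r => by
    obtain ⟨z, hz⟩ := NormedField.exists_lt_norm 𝕜 r
    exact le_trans (by exact_mod_cast hz.le) (hle_radius z)
  have hsum : p.sum = fun z => ∑' k, c k * z ^ k :=
    FormalMultilinearSeries.ofScalarsSum_eq_tsum c
  simpa only [hradius, hsum] using p.hasFPowerSeriesOnBall (hradius ▸ ENNReal.zero_lt_top)

lemma differentiable_tsum_mul_pow (hc : ∀ z : 𝕜, Summable fun k => c k * z ^ k) :
    Differentiable 𝕜 fun z => ∑' k, c k * z ^ k :=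
  differentiableOn_univ.1 <| by simpa using (hasFPowerSeriesOnBall_tsum_mul_pow hc).differentiableOn

lemma hasSum_deriv_tsum_mul_pow (hc : ∀ z : 𝕜, Summable fun k => c k * z ^ k) (z : 𝕜) :
    HasSum (fun k : ℕ => ((k : 𝕜) + 1) * c (k + 1) * z ^ k)
      (deriv (fun y => ∑' k, c k * y ^ k) z) := by
  have hfderiv := (hasFPowerSeriesOnBall_tsum_mul_pow hc).fderiv.hasSum (y := z) (by simp)
  simpa [FormalMultilinearSeries.apply_eq_pow_smul_coeff, mul_comm] using
    (ContinuousLinearMap.apply 𝕜 𝕜 (1 : 𝕜)).hasSum hfderiv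

end PowerSeries

section BetaIntegral

variable {u v : ℝ}

lemma ofReal_rpow_mul_one_sub_rpow {x : ℝ} (hx : x ∈ Icc (0 : ℝ) 1) :
    ((x ^ u * (1 - x) ^ v : ℝ) : ℂ) = (x : ℂ) ^ (u : ℂ) * (1 - x : ℂ) ^ (v : ℂ) := by
  push_cast [Complex.ofReal_cpow hx.1, Complex.ofReal_cpow (sub_nonneg.2 hx.2)]
  rfl

lemma intervalIntegrable_rpow_mul_one_sub_rpow (hu : 0 < u) (hv : 0 < v) :
    IntervalIntegrable (fun x : ℝ => x ^ (u - 1) * (1 - x) ^ (v - 1)) volume 0 1 := by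
  have hbeta := Complex.betaIntegral_convergent (u := u) (v := v) (by simpa) (by simpa)
  rw [intervalIntegrable_iff_integrableOn_Icc_of_le zero_le_one] at hbeta ⊢
  have hcast : EqOn (fun x : ℝ => (x : ℂ) ^ ((u : ℂ) - 1) * (1 - (x : ℂ)) ^ ((v : ℂ) - 1))
      (fun x => ((x ^ (u - 1) * (1 - x) ^ (v - 1) : ℝ) : ℂ)) (Icc 0 1) := fun x hx => by
    simp [ofReal_rpow_mul_one_sub_rpow hx]
  simpa using! (hbeta.congr_fun hcast measurableSet_Icc).re

lemma integral_rpow_mul_one_sub_rpow (hu : 0 < u) (hv : 0 < v) :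
    ∫ x in (0 : ℝ)..1, x ^ (u - 1) * (1 - x) ^ (v - 1) = ProbabilityTheory.beta u v := by
  have hcast : Complex.betaIntegral u v
      = ∫ x in (0 : ℝ)..1, ((x ^ (u - 1) * (1 - x) ^ (v - 1) : ℝ) : ℂ) := by
    refine intervalIntegral.integral_congr fun x hx => ?_
    rw [uIcc_of_le zero_le_one] at hx
    simp [ofReal_rpow_mul_one_sub_rpow hx]
  rw [ProbabilityTheory.beta_eq_betaIntegralReal u v hu hv, hcast, intervalIntegral.integral_ofReal,
    Complex.ofReal_re]

lemma integral_rpow_mul_one_sub_rpow_mul_monomial {α γ μ : ℝ} (hα : 0 ≤ α) (hγ : 0 < γ)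
    (hμ : 0 < μ) (b r : ℝ) (k : ℕ) :
    ∫ x in (0 : ℝ)..1, x ^ (γ - 1) * (1 - x) ^ (μ - 1) * (b * (r * x ^ α) ^ k)
      = ProbabilityTheory.beta (γ + k * α) μ * (b * r ^ k) := by
  rw [← integral_rpow_mul_one_sub_rpow (by positivity) hμ, ← intervalIntegral.integral_mul_const]
  refine intervalIntegral.integral_congr_ae (.of_forall fun x hx => ?_)
  rw [uIoc_of_le zero_le_one] at hx
  have hpow : x ^ (γ + k * α - 1) = x ^ (γ - 1) * (x ^ α) ^ k := by
    rw [← rpow_mul_natCast hx.1.le, ← rpow_add hx.1]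
    ring_nf
  rw [hpow, mul_pow]
  ring

lemma integral_rpow_mul_one_sub_rpow_mul_tsum {α γ μ r : ℝ} (hα : 0 ≤ α) (hγ : 0 < γ) (hμ : 0 < μ)
    {c : ℕ → ℝ} (hc : Summable fun k => c k * r ^ k) :
    ∫ x in (0 : ℝ)..1, x ^ (γ - 1) * (1 - x) ^ (μ - 1) * ∑' k, c k * (r * x ^ α) ^ k
      = ∑' k : ℕ, ProbabilityTheory.beta (γ + k * α) μ * (c k * r ^ k) := by
  have hterm_le (k : ℕ) (x : ℝ) (hx : x ∈ Ioc (0 : ℝ) 1) :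
      ‖c k * (r * x ^ α) ^ k‖ ≤ |c k * r ^ k| := by
    have hxα : 0 ≤ x ^ α := rpow_nonneg hx.1.le α
    rw [mul_pow, ← mul_assoc, norm_mul, Real.norm_eq_abs, Real.norm_of_nonneg (by positivity)]
    exact mul_le_of_le_one_right (abs_nonneg _)
      (pow_le_one₀ hxα (rpow_le_one hx.1.le hx.2 hα))
  have hnorm_le (k : ℕ) (x : ℝ) (hx : x ∈ Ioc (0 : ℝ) 1) :
      ‖x ^ (γ - 1) * (1 - x) ^ (μ - 1) * (c k * (r * x ^ α) ^ k)‖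
        ≤ x ^ (γ - 1) * (1 - x) ^ (μ - 1) * |c k * r ^ k| := by
    have hx0 : 0 ≤ x ^ (γ - 1) := rpow_nonneg hx.1.le _
    have hx1 : 0 ≤ (1 - x) ^ (μ - 1) := rpow_nonneg (sub_nonneg.2 hx.2) _
    rw [norm_mul, Real.norm_of_nonneg (by positivity)]
    gcongr
    exact hterm_le k x hx
  have hbound_integrable : IntervalIntegrable
      (fun x => ∑' k, x ^ (γ - 1) * (1 - x) ^ (μ - 1) * |c k * r ^ k|) volume 0 1 := by
    simp only [tsum_mul_left]
    exact (intervalIntegrable_rpow_mul_one_sub_rpow hγ hμ).mul_const _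
  have hsum := intervalIntegral.hasSum_integral_of_dominated_convergence (a := 0) (b := 1)
    (μ := volume) (F := fun k x => x ^ (γ - 1) * (1 - x) ^ (μ - 1) * (c k * (r * x ^ α) ^ k))
    (fun k x => x ^ (γ - 1) * (1 - x) ^ (μ - 1) * |c k * r ^ k|)
    (fun k => Measurable.aestronglyMeasurable (by fun_prop))
    (fun k => .of_forall fun x hx => hnorm_le k x (uIoc_of_le (zero_le_one' ℝ) ▸ hx))
    (.of_forall fun x _ => hc.abs.mul_left _) hbound_integrable
    (.of_forall fun x hx => ((Summable.of_norm_bounded hc.abs fun k =>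
      hterm_le k x (uIoc_of_le (zero_le_one' ℝ) ▸ hx)).hasSum.mul_left _))
  rw [← hsum.tsum_eq]
  exact tsum_congr fun k => integral_rpow_mul_one_sub_rpow_mul_monomial hα hγ hμ (c k) r k

end BetaIntegral

lemma continuousOn_dslope_of_differentiableAt {𝕜 E : Type*} [NontriviallyNormedField 𝕜]
    [NormedAddCommGroup E] [NormedSpace 𝕜 E] {f : 𝕜 → E} {b : 𝕜} {s : Set 𝕜}
    (hf : ContinuousOn f s) (hfb : DifferentiableAt 𝕜 f b) : ContinuousOn (dslope f b) s :=
  fun x hx => by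
    rcases eq_or_ne x b with rfl | hxb
    · exact (continuousAt_dslope_same.2 hfb).continuousWithinAt
    · exact (continuousWithinAt_dslope_of_ne hxb).2 (hf x hx)

section ExtremumPrinciple

variable {a b α : ℝ} {G G' : ℝ → ℝ}

lemma sub_rpow_mul_eq_neg_mul_dslope (hGb : G b = 0) (p : ℝ) {x : ℝ} (hx : x < b) :
    (b - x) ^ (p - 1) * G x = -((b - x) ^ p * dslope G b x) := by
  have hslope : (x - b) * dslope G b x = G x := by
    simpa [hGb] using sub_smul_dslope G b x
  rw [rpow_sub_one (sub_pos.2 hx).ne', ← hslope]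
  field [(sub_pos.2 hx).ne']

lemma intervalIntegrable_sub_rpow (a b : ℝ) (hα : 0 < α) :
    IntervalIntegrable (fun x => (b - x) ^ (α - 1)) volume a b := by
  simpa using (intervalIntegral.intervalIntegrable_rpow' (a := b - a) (b := 0)
    (by linarith : -1 < α - 1)).comp_sub_left b

lemma intervalIntegrable_sub_rpow_mul (hα : 0 < α) (hab : a ≤ b) (hG : ContinuousOn G (Icc a b))
    (hGb : DifferentiableAt ℝ G b) (hGb0 : G b = 0) :
    IntervalIntegrable (fun x => (b - x) ^ (α - 2) * G x) volume a b := by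
  have hdslope : IntervalIntegrable (fun x => -((b - x) ^ (α - 1) * dslope G b x)) volume a b :=
    ((intervalIntegrable_sub_rpow a b hα).mul_continuousOn
      (uIcc_of_le hab ▸ continuousOn_dslope_of_differentiableAt hG hGb)).neg
  rw [intervalIntegrable_iff_integrableOn_Ioo_of_le hab] at hdslope ⊢
  refine hdslope.congr_fun (fun x hx => ?_) measurableSet_Ioo
  simp only [← sub_rpow_mul_eq_neg_mul_dslope hGb0 _ hx.2]
  ring_nf

/-- As `G` vanishes to first order at `b`, the boundary term at this singular end point is zero. -/
lemma integral_sub_rpow_mul_deriv (hα : 0 < α) (hab : a ≤ b) (hG : ContinuousOn G (Icc a b))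
    (hG' : ∀ x ∈ Ioo a b, HasDerivAt G (G' x) x) (hGb : DifferentiableAt ℝ G b) (hGb0 : G b = 0)
    (hint : IntervalIntegrable (fun x => (b - x) ^ (α - 1) * G' x) volume a b) :
    ∫ x in a..b, (b - x) ^ (α - 1) * G' x
      = -((b - a) ^ (α - 1) * G a) - (1 - α) * ∫ x in a..b, (b - x) ^ (α - 2) * G x := by
  have hcont : ContinuousOn (fun x => (b - x) ^ (α - 1) * G x) (Icc a b) := by
    have hdslope : ContinuousOn (fun x => -((b - x) ^ α * dslope G b x)) (Icc a b) :=
      (((continuousOn_const.sub continuousOn_id).rpow_const fun _ _ => .inr hα.le).mul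
        (continuousOn_dslope_of_differentiableAt hG hGb)).neg
    refine hdslope.congr fun x hx => ?_
    rcases hx.2.eq_or_lt with rfl | hxb
    · simp [hGb0, hα.ne']
    · exact sub_rpow_mul_eq_neg_mul_dslope hGb0 α hxb
  have hderiv (x : ℝ) (hx : x ∈ Ioo a b) : HasDerivAt (fun x => (b - x) ^ (α - 1) * G x)
      ((1 - α) * ((b - x) ^ (α - 2) * G x) + (b - x) ^ (α - 1) * G' x) x := by
    have hpow := ((hasDerivAt_id x).const_sub b).rpow_const (p := α - 1)
      (.inl (sub_pos.2 hx.2).ne')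
    convert! hpow.mul (hG' x hx) using 1
    simp only [id, show α - 1 - 1 = α - 2 by ring]
    ring
  have hint' := (intervalIntegrable_sub_rpow_mul hα hab hG hGb hGb0).const_mul (1 - α)
  have hftc := intervalIntegral.integral_eq_sub_of_hasDerivAt_of_le hab hcont hderiv
    (hint'.add hint)
  rw [intervalIntegral.integral_add hint' hint, intervalIntegral.integral_const_mul, hGb0,
    mul_zero] at hftc
  linarith

/-- The extremum principle for fractional derivatives: the integral is, up to a positive factor, the
Caputo derivative of order `1 - α` of `G` at `b`, where `G` attains its minimum over `[a, b]`. -/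
lemma integral_sub_rpow_mul_deriv_neg (hα : 0 < α) (hα1 : α < 1) (hab : a < b)
    (hG : ContinuousOn G (Icc a b)) (hG' : ∀ x ∈ Ioo a b, HasDerivAt G (G' x) x)
    (hGb : DifferentiableAt ℝ G b) (hGb0 : G b = 0) (hGa : 0 ≤ G a) (hpos : ∀ x ∈ Ioo a b, 0 < G x)
    (hint : IntervalIntegrable (fun x => (b - x) ^ (α - 1) * G' x) volume a b) :
    ∫ x in a..b, (b - x) ^ (α - 1) * G' x < 0 := by
  have hboundary : 0 ≤ (b - a) ^ (α - 1) * G a :=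
    mul_nonneg (rpow_nonneg (sub_pos.2 hab).le _) hGa
  have hintegral : 0 < ∫ x in a..b, (b - x) ^ (α - 2) * G x :=
    intervalIntegral.intervalIntegral_pos_of_pos_on
      (intervalIntegrable_sub_rpow_mul hα hab.le hG hGb hGb0)
      (fun x hx => mul_pos (rpow_pos_of_pos (sub_pos.2 hx.2) _) (hpos x hx)) hab
  rw [integral_sub_rpow_mul_deriv hα hab.le hG hG' hGb hGb0 hint]
  nlinarith

end ExtremumPrinciple

lemma pos_of_deriv_neg_of_eq_zero {f : ℝ → ℝ} {b : ℝ} (hf : ContinuousOn f (Iic b)) (hb : 0 < f b)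
    (hderiv : ∀ r < b, f r = 0 → (∀ y ∈ Ioc r b, 0 < f y) → deriv f r < 0) {x : ℝ} (hx : x ≤ b) :
    0 < f x := by
  by_contra! hfx
  have hcompact : IsCompact (Icc x b ∩ f ⁻¹' Iic 0) := isCompact_Icc.of_isClosed_subset
    ((hf.mono Icc_subset_Iic_self).preimage_isClosed_of_isClosed isClosed_Icc isClosed_Iic)
    inter_subset_left
  obtain ⟨r, ⟨⟨hxr, hrb⟩, hfr⟩, hmax⟩ := hcompact.exists_isGreatest ⟨x, ⟨le_rfl, hx⟩, hfx⟩
  have hpos (y : ℝ) (hy : y ∈ Ioc r b) : 0 < f y := by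
    by_contra! hfy
    exact (hmax ⟨⟨hxr.trans hy.1.le, hy.2⟩, hfy⟩).not_gt hy.1
  replace hrb : r < b := hrb.lt_of_ne fun h => (h ▸ hb).not_ge hfr
  have hright : ∀ᶠ y in 𝓝[>] r, 0 < f y := by
    filter_upwards [Ioc_mem_nhdsGT hrb] using hpos
  have hfr0 : f r = 0 := le_antisymm hfr <| ge_of_tendsto
    (((hf r hrb.le).mono Ioc_subset_Iic_self).mono_left (nhdsWithin_Ioc_eq_nhdsGT hrb).ge)
    (hright.mono fun _ => le_of_lt)
  have hsign : ∀ᶠ y in 𝓝[>] r, SignType.sign (f y) = SignType.sign (r - y) :=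
    (eventually_nhdsWithin_sign_eq_of_deriv_neg (hderiv r hrb hfr0 hpos) hfr0).filter_mono
      nhdsWithin_le_nhds
  obtain ⟨y, ⟨hfy, hy⟩, hry⟩ := ((hright.and hsign).and self_mem_nhdsWithin).exists
  rw [sign_pos hfy, sign_neg (sub_neg.2 hry)] at hy
  exact absurd hy (by decide)

lemma integral_comp_add_mul_lt_of_strictAntiOn {φ w : ℝ → ℝ} {a b l u : ℝ} (hlu : l < u)
    (hab : a < b) (hφ : ContinuousOn φ (Ici (l + a))) (hφ_anti : StrictAntiOn φ (Ici (l + a)))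
    (hw : ContinuousOn w (Icc l u)) (hw_nonneg : ∀ η ∈ Icc l u, 0 ≤ w η)
    (hw_pos : ∃ η ∈ Icc l u, 0 < w η) :
    ∫ η in l..u, φ (η + b) * w η < ∫ η in l..u, φ (η + a) * w η := by
  have hcont (c : ℝ) (hc : a ≤ c) : ContinuousOn (fun η => φ (η + c) * w η) (Icc l u) :=
    (hφ.comp (by fun_prop) fun η hη => add_le_add hη.1 hc).mul hw
  have hφ_lt (η : ℝ) (hη : η ∈ Icc l u) : φ (η + b) < φ (η + a) :=
    hφ_anti (add_le_add_left hη.1 a) (add_le_add hη.1 hab.le) (add_lt_add_right hab η)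
  obtain ⟨m, hm, hwm⟩ := hw_pos
  exact intervalIntegral.integral_lt_integral_of_continuousOn_of_le_of_exists_lt hlu
    (hcont b hab.le) (hcont a le_rfl)
    (fun η hη => mul_le_mul_of_nonneg_right (hφ_lt η (Ioc_subset_Icc_self hη)).le
      (hw_nonneg η (Ioc_subset_Icc_self hη)))
    ⟨m, hm, mul_lt_mul_of_pos_right (hφ_lt m hm) hwm⟩

section CosineLobes

/-- The integral of `φ ξ * cos (x ξ)` over the half period of `cos (x ·)` centred at `kπ/x`, with
the sign that makes it nonnegative for `φ ≥ 0` and `x > 0`. It is `a_k` with a general function `φ`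
in place of the Mittag-Leffler one, except that `a_0` covers only the right half of its period. -/
noncomputable def cosLobe (φ : ℝ → ℝ) (x : ℝ) (k : ℕ) : ℝ :=
  (-1) ^ k * ∫ ξ in (π * (2 * k - 1) / (2 * x))..(π * (2 * k + 1) / (2 * x)), φ ξ * cos (x * ξ)

variable {φ : ℝ → ℝ} {x : ℝ}

lemma cosLobe_eq_integral_comp_add (φ : ℝ → ℝ) (hx : x ≠ 0) (k : ℕ) :
    cosLobe φ x k
      = ∫ η in (-(π / (2 * x)))..(π / (2 * x)), φ (η + k * π / x) * cos (x * η) := by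
  have hleft : π * (2 * k - 1) / (2 * x) = -(π / (2 * x)) + k * π / x := by field
  have hright : π * (2 * k + 1) / (2 * x) = π / (2 * x) + k * π / x := by field
  rw [cosLobe, hleft, hright,
    ← intervalIntegral.integral_comp_add_right (fun ξ => φ ξ * cos (x * ξ)),
    ← intervalIntegral.integral_const_mul]
  refine intervalIntegral.integral_congr fun η _ => ?_
  have hshift : x * (η + k * π / x) = x * η + k * π := by field
  have hsign : (-1 : ℝ) ^ k * (-1) ^ k = 1 := by simp [← mul_pow]
  simp only [hshift, cos_add_nat_mul_pi]
  linear_combination φ (η + k * π / x) * cos (x * η) * hsign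

lemma cosLobe_succ_lt (hx : 0 < x) (hφ : ContinuousOn φ (Ici 0)) (hφ_anti : StrictAntiOn φ (Ici 0))
    {k : ℕ} (hk : 1 ≤ k) : cosLobe φ x (k + 1) < cosLobe φ x k := by
  have hlobe : 0 < π / (2 * x) := by positivity
  have hstart : Ici (-(π / (2 * x)) + k * π / x) ⊆ Ici 0 := by
    have hk' : (1 : ℝ) ≤ k := by exact_mod_cast hk
    rw [Ici_subset_Ici,
      show -(π / (2 * x)) + k * π / x = (2 * k - 1) * (π / (2 * x)) by field]
    exact mul_nonneg (by linarith) hlobe.le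
  have hcos (η : ℝ) (hη : η ∈ Icc (-(π / (2 * x))) (π / (2 * x))) : 0 ≤ cos (x * η) := by
    have hxη : x * (π / (2 * x)) = π / 2 := by field
    exact cos_nonneg_of_mem_Icc ⟨by nlinarith [hη.1], by nlinarith [hη.2]⟩
  rw [cosLobe_eq_integral_comp_add φ hx.ne', cosLobe_eq_integral_comp_add φ hx.ne']
  exact integral_comp_add_mul_lt_of_strictAntiOn (neg_lt_self hlobe) (by gcongr; simp)
    (hφ.mono hstart) (hφ_anti.mono hstart) (by fun_prop) hcos
    ⟨0, ⟨neg_nonpos.2 hlobe.le, hlobe.le⟩, by simp⟩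

end CosineLobes

section Gamma

variable {M s : ℝ}

lemma rpow_mul_exp_neg_le_Gamma (hM : 0 ≤ M) (hs : 1 ≤ s) :
    M ^ (s - 1) * exp (-M) ≤ Real.Gamma s := by
  have hs0 : 0 < s := zero_lt_one.trans_le hs
  have hint := Real.GammaIntegral_convergent hs0
  calc M ^ (s - 1) * exp (-M) = ∫ x in Ioi M, exp (-x) * M ^ (s - 1) := by
        rw [integral_mul_const, integral_exp_neg_Ioi, mul_comm]
    _ ≤ ∫ x in Ioi M, exp (-x) * x ^ (s - 1) := by
        refine setIntegral_mono_on ((integrableOn_exp_neg_Ioi M).mul_const _)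
          (hint.mono_set (Ioi_subset_Ioi hM)) measurableSet_Ioi fun x hx => ?_
        gcongr
        exact (mem_Ioi.1 hx).le
    _ ≤ ∫ x in Ioi 0, exp (-x) * x ^ (s - 1) := by
        refine setIntegral_mono_set hint ?_ (Ioi_subset_Ioi hM).eventuallyLE
        filter_upwards [ae_restrict_mem measurableSet_Ioi] with x hx
        have := mem_Ioi.1 hx
        positivity
    _ = Real.Gamma s := (Real.Gamma_eq_integral hs0).symm

lemma inv_Gamma_le (hM : 0 < M) (hs : 1 ≤ s) : (Real.Gamma s)⁻¹ ≤ exp M * M ^ (1 - s) := by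
  calc (Real.Gamma s)⁻¹ ≤ (M ^ (s - 1) * exp (-M))⁻¹ :=
        inv_anti₀ (by positivity) (rpow_mul_exp_neg_le_Gamma hM.le hs)
    _ = exp M * M ^ (1 - s) := by
        rw [mul_inv, ← exp_neg, neg_neg, ← rpow_neg hM.le, neg_sub, mul_comm]

lemma summable_inv_Gamma_mul_pow {α : ℝ} (hα : 0 < α) (β r : ℝ) :
    Summable fun k : ℕ => (Real.Gamma (β + k * α))⁻¹ * r ^ k := by
  set M : ℝ := (|r| + 1) ^ α⁻¹
  have hM : 0 < M := by positivity
  have hratio : |r| / M ^ α < 1 := by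
    rw [rpow_inv_rpow (by positivity) hα.ne', div_lt_one (by positivity)]
    exact lt_add_one _
  refine .of_norm_bounded_eventually_nat (g := fun k => exp M * M ^ (1 - β) * (|r| / M ^ α) ^ k)
    ((summable_geometric_of_lt_one (by positivity) hratio).mul_left _) ?_
  have hlarge : ∀ᶠ k : ℕ in atTop, 1 - β ≤ k * α :=
    (tendsto_natCast_atTop_atTop.atTop_mul_const hα).eventually_ge_atTop _
  filter_upwards [hlarge] with k hk
  have hs : 1 ≤ β + k * α := by linarith
  have hΓ : 0 < (Real.Gamma (β + k * α))⁻¹ :=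
    inv_pos.2 (Real.Gamma_pos_of_pos (zero_lt_one.trans_le hs))
  calc ‖(Real.Gamma (β + k * α))⁻¹ * r ^ k‖ = (Real.Gamma (β + k * α))⁻¹ * |r| ^ k := by
        rw [norm_mul, norm_pow, Real.norm_of_nonneg hΓ.le, Real.norm_eq_abs]
    _ ≤ exp M * M ^ (1 - (β + k * α)) * |r| ^ k := by
        gcongr
        exact inv_Gamma_le hM hs
    _ = exp M * M ^ (1 - β) * (|r| / M ^ α) ^ k := by
        rw [show 1 - (β + k * α) = 1 - β - α * k by ring, rpow_sub hM, rpow_mul_natCast hM.le,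
          div_pow]
        ring

end Gamma

/-- The two-parameter Mittag-Leffler function `E_{α,β}(r) = ∑ r^k / Γ(β+kα)`. As `Real.Gamma`
takes the value `0` at its poles, the coefficients agree with the entire function `1/Γ` there. -/
noncomputable def mittagLeffler₂ (α β r : ℝ) : ℝ :=
  ∑' k : ℕ, (Real.Gamma (β + k * α))⁻¹ * r ^ k

section MittagLeffler

variable {α β μ r : ℝ}

lemma mittagLeffler_eq_mittagLeffler₂ (α : ℝ) : mittagLeffler α = mittagLeffler₂ α 1 := by
  funext r
  simp only [mittagLeffler, mittagLeffler₂, div_eq_inv_mul]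

lemma differentiable_mittagLeffler₂ (hα : 0 < α) (β : ℝ) : Differentiable ℝ (mittagLeffler₂ α β) :=
  differentiable_tsum_mul_pow (summable_inv_Gamma_mul_pow hα β)

lemma hasSum_deriv_mittagLeffler₂ (hα : 0 < α) (β r : ℝ) :
    HasSum (fun k : ℕ => ((k : ℝ) + 1) * (Real.Gamma (β + (k + 1 : ℕ) * α))⁻¹ * r ^ k)
      (deriv (mittagLeffler₂ α β) r) :=
  hasSum_deriv_tsum_mul_pow (summable_inv_Gamma_mul_pow hα β) r

lemma continuous_deriv_mittagLeffler₂ (hα : 0 < α) (β : ℝ) :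
    Continuous (deriv (mittagLeffler₂ α β)) := by
  have hsum (r : ℝ) := hasSum_deriv_mittagLeffler₂ hα β r
  simpa only [(hsum _).tsum_eq] using
    (differentiable_tsum_mul_pow fun r => (hsum r).summable).continuous

lemma mittagLeffler₂_eq_inv_Gamma_add (hα : 0 < α) (β r : ℝ) :
    mittagLeffler₂ α β r = (Real.Gamma β)⁻¹ + r * mittagLeffler₂ α (α + β) r := by
  simp only [mittagLeffler₂]
  rw [(summable_inv_Gamma_mul_pow hα β r).tsum_eq_zero_add, ← tsum_mul_left]
  congr 1
  · simp
  · refine tsum_congr fun k => ?_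
    rw [show α + β + k * α = β + (k + 1 : ℕ) * α by push_cast; ring]
    ring

lemma mittagLeffler₂_zero (hα : 0 < α) (r : ℝ) :
    mittagLeffler₂ α 0 r = r * mittagLeffler₂ α α r := by
  simpa using mittagLeffler₂_eq_inv_Gamma_add hα 0 r

lemma deriv_mittagLeffler₂_one (hα : 0 < α) (r : ℝ) :
    deriv (mittagLeffler₂ α 1) r = mittagLeffler₂ α α r / α := by
  rw [← (hasSum_deriv_mittagLeffler₂ hα 1 r).tsum_eq, mittagLeffler₂, ← tsum_div_const]
  refine tsum_congr fun k => ?_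
  have hΓ : Real.Gamma (1 + (k + 1 : ℕ) * α) = (k + 1) * α * Real.Gamma (α + k * α) := by
    rw [show α + k * α = (k + 1) * α by ring, ← Real.Gamma_add_one (by positivity)]
    push_cast
    ring_nf
  rw [hΓ]
  field

lemma mittagLeffler₂_pos_of_nonneg (hα : 0 < α) (hβ : 0 < β) (hr : 0 ≤ r) :
    0 < mittagLeffler₂ α β r := by
  have hΓ (k : ℕ) : 0 < Real.Gamma (β + k * α) := Real.Gamma_pos_of_pos (by positivity)
  refine (summable_inv_Gamma_mul_pow hα β r).tsum_pos (fun k => ?_) 0 ?_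
  · have := hΓ k
    positivity
  · have := hΓ 0
    rw [pow_zero]
    positivity

lemma integral_rpow_mul_one_sub_rpow_mul_deriv_mittagLeffler₂ (hα : 0 < α) (hαβ : 0 < α + β)
    (hμ : 0 < μ) (r : ℝ) :
    ∫ x in (0 : ℝ)..1,
        x ^ (α + β - 1) * (1 - x) ^ (μ - 1) * deriv (mittagLeffler₂ α β) (r * x ^ α)
      = Real.Gamma μ * deriv (mittagLeffler₂ α (β + μ)) r := by
  have hsum (r : ℝ) := hasSum_deriv_mittagLeffler₂ hα β r
  simp only [← (hsum _).tsum_eq, ← (hasSum_deriv_mittagLeffler₂ hα (β + μ) r).tsum_eq]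
  rw [integral_rpow_mul_one_sub_rpow_mul_tsum hα.le hαβ hμ (hsum r).summable, ← tsum_mul_left]
  refine tsum_congr fun k => ?_
  have hγ : α + β + k * α = β + (k + 1 : ℕ) * α := by push_cast; ring
  have hΓ : 0 < Real.Gamma (β + (k + 1 : ℕ) * α) :=
    Real.Gamma_pos_of_pos (hγ ▸ by positivity)
  rw [ProbabilityTheory.beta, hγ, add_right_comm β]
  field [hΓ.ne']

lemma hasDerivAt_mittagLeffler₂_mul_rpow (hα : 0 < α) (β r : ℝ) {x : ℝ} (hx : x ≠ 0) :
    HasDerivAt (fun x => mittagLeffler₂ α β (r * x ^ α))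
      (α * r * (x ^ (α - 1) * deriv (mittagLeffler₂ α β) (r * x ^ α))) x := by
  have hpow := (hasDerivAt_rpow_const (p := α) (.inl hx)).const_mul r
  convert! ((differentiable_mittagLeffler₂ hα β) (r * x ^ α)).hasDerivAt.comp x hpow using 1
  ring

lemma intervalIntegrable_one_sub_rpow_mul_deriv_mittagLeffler₂_zero (hα : 0 < α) (hμ : 0 < μ)
    (r : ℝ) : IntervalIntegrable (fun x => (1 - x) ^ (μ - 1) *
      (α * r * (x ^ (α - 1) * deriv (mittagLeffler₂ α 0) (r * x ^ α)))) volume 0 1 := by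
  have hcont : Continuous fun x : ℝ => deriv (mittagLeffler₂ α 0) (r * x ^ α) :=
    (continuous_deriv_mittagLeffler₂ hα 0).comp ((continuous_rpow_const hα.le).const_mul r)
  refine (((intervalIntegrable_rpow_mul_one_sub_rpow hα hμ).mul_continuousOn
    hcont.continuousOn).const_mul (α * r)).congr_ae (.of_forall fun x => ?_)
  ring

lemma integral_one_sub_rpow_mul_deriv_mittagLeffler₂_zero (hα : 0 < α) (hμ : 0 < μ) (r : ℝ) :
    ∫ x in (0 : ℝ)..1, (1 - x) ^ (μ - 1) *
        (α * r * (x ^ (α - 1) * deriv (mittagLeffler₂ α 0) (r * x ^ α)))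
      = r * (α * Real.Gamma μ * deriv (mittagLeffler₂ α μ) r) := by
  have hintegral := integral_rpow_mul_one_sub_rpow_mul_deriv_mittagLeffler₂ (β := 0) hα
    (by simpa) hμ r
  rw [add_zero, zero_add] at hintegral
  rw [mul_assoc, ← hintegral, ← intervalIntegral.integral_const_mul,
    ← intervalIntegral.integral_const_mul]
  exact intervalIntegral.integral_congr fun x _ => by ring

lemma deriv_mittagLeffler₂_self_neg_of_eq_zero (hα : 0 < α) (hα1 : α < 1) (hr : r < 0)
    (hzero : mittagLeffler₂ α α r = 0) (hpos : ∀ y ∈ Ioc r 0, 0 < mittagLeffler₂ α α y) :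
    deriv (mittagLeffler₂ α α) r < 0 := by
  set G : ℝ → ℝ := fun x => -mittagLeffler₂ α 0 (r * x ^ α) with hG
  have hGcont : Continuous G := ((differentiable_mittagLeffler₂ hα 0).continuous.comp
    ((continuous_rpow_const hα.le).const_mul r)).neg
  have hGderiv (x : ℝ) (hx : x ≠ 0) :=
    (hasDerivAt_mittagLeffler₂_mul_rpow hα 0 r hx).neg
  have hGpos (x : ℝ) (hx : x ∈ Ioo 0 1) : 0 < G x := by
    have hxα : 0 < x ^ α := rpow_pos_of_pos hx.1 α
    have hrx : r * x ^ α < 0 := mul_neg_of_neg_of_pos hr hxα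
    have hE : 0 < mittagLeffler₂ α α (r * x ^ α) :=
      hpos _ ⟨lt_mul_of_lt_one_right hr (rpow_lt_one hx.1.le hx.2 hα), hrx.le⟩
    simpa only [hG, mittagLeffler₂_zero hα] using neg_pos.2 (mul_neg_of_neg_of_pos hrx hE)
  have hneg := integral_sub_rpow_mul_deriv_neg hα hα1 one_pos hGcont.continuousOn
    (fun x hx => hGderiv x hx.1.ne') (hGderiv 1 one_ne_zero).differentiableAt
    (by simp [hG, mittagLeffler₂_zero hα, hzero])
    (by simp [hG, mittagLeffler₂_zero hα, hα.ne']) hGpos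
    (by simpa only [mul_neg] using!
      (intervalIntegrable_one_sub_rpow_mul_deriv_mittagLeffler₂_zero hα hα r).neg)
  simp only [mul_neg, intervalIntegral.integral_neg,
    integral_one_sub_rpow_mul_deriv_mittagLeffler₂_zero hα hα] at hneg
  have hprod : α * Real.Gamma α * deriv (mittagLeffler₂ α α) r < 0 := by nlinarith
  exact neg_of_mul_neg_right hprod (mul_pos hα (Real.Gamma_pos_of_pos hα)).le

lemma mittagLeffler₂_self_pos (hα : 0 < α) (hα1 : α < 1) (r : ℝ) : 0 < mittagLeffler₂ α α r := by
  rcases le_total 0 r with hr | hr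
  · exact mittagLeffler₂_pos_of_nonneg hα hα hr
  · exact pos_of_deriv_neg_of_eq_zero (differentiable_mittagLeffler₂ hα α).continuous.continuousOn
      (mittagLeffler₂_pos_of_nonneg hα hα le_rfl)
      (fun _ => deriv_mittagLeffler₂_self_neg_of_eq_zero hα hα1) hr

lemma strictMono_mittagLeffler (hα : 0 < α) (hα1 : α < 1) : StrictMono (mittagLeffler α) :=
  strictMono_of_deriv_pos fun r => by
    rw [mittagLeffler_eq_mittagLeffler₂, deriv_mittagLeffler₂_one hα]
    exact div_pos (mittagLeffler₂_self_pos hα hα1 r) hα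

lemma continuous_mittagLeffler (hα : 0 < α) : Continuous (mittagLeffler α) :=
  mittagLeffler_eq_mittagLeffler₂ α ▸ (differentiable_mittagLeffler₂ hα 1).continuous

lemma strictAntiOn_mittagLeffler_one_sub_sq_mul (hα : 0 < α) (hα1 : α < 1) {s : ℝ} (hs : 0 < s) :
    StrictAntiOn (fun ξ => mittagLeffler α ((1 - ξ ^ 2) * s)) (Ici 0) := fun _ hξ _ _ hlt =>
  strictMono_mittagLeffler hα hα1 <| mul_lt_mul_of_pos_right
    (sub_lt_sub_left (pow_lt_pow_left₀ hlt hξ two_ne_zero) 1) hs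

end MittagLeffler

lemma aCoeff_eq_cosLobe {α t x : ℝ} {k : ℕ} (hk : k ≠ 0) :
    aCoeff α t x k = cosLobe (fun ξ => mittagLeffler α ((1 - ξ ^ 2) * t ^ α)) x k :=
  if_neg hk

theorem aCoeff_strict_anti (α t x : ℝ) (hα : 0 < α) (hα1 : α < 1) (ht : 0 < t) (hx : 0 < x) :
    ∀ k : ℕ, 1 ≤ k → aCoeff α t x (k + 1) < aCoeff α t x k := by
  intro k hk
  have hcont : Continuous fun ξ : ℝ => mittagLeffler α ((1 - ξ ^ 2) * t ^ α) :=
    (continuous_mittagLeffler hα).comp (by fun_prop)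
  rw [aCoeff_eq_cosLobe (by lia), aCoeff_eq_cosLobe (by lia)]
  exact cosLobe_succ_lt hx hcont.continuousOn
    (strictAntiOn_mittagLeffler_one_sub_sq_mul hα hα1 (rpow_pos_of_pos ht α)) hk
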